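/- Let T be a decision tree for a training set (E, λ). For a node v of T, let s_v be the number of inner nodes of the subtree T_v rooted at v, let t_v = min(|{e ∈ E[T,v] : λ(e)=blue}|, |{e ∈ E[T,v] : λ(e)=red}|), and for 0 ≤ k' ≤ s_v let opt(v,k') be the minimum, over all trees obtained from T_v by sequences of subtree replacement operations pruning exactly k' inner nodes in total, of the number of examples of E[T,v] misclassified by the resulting tree (examples of E[T,v] being routed from the root of the resulting tree). Then: (i) if v is a leaf, opt(v,0) equals the number of examples of E[T,v] whose label differs from the label of v; (ii) if v is an inner node with left child u and right child w, then opt(v, s_v) = t_v, and for every 0 ≤ k' < s_v, opt(v,k') = min over all k* with 0 ≤ k* ≤ k', k* ≤ s_u and k'−k* ≤ s_w of opt(u,k*) + opt(w,k'−k*). -/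

import Mathlib

/-- The two class labels. -/
inductive Label where
  | blue
  | red
deriving DecidableEq

/-- A decision tree over examples `ι → ℝ` with classes `{blue, red}`:
every inner node carries a feature and a threshold, every leaf a class label.
An example goes to the left child if its value in the node's feature is at most
the threshold, and to the right child otherwise. -/
inductive DTree (ι : Type) where
  | leaf (c : Label)
  | node (feat : ι) (thr : ℝ) (left right : DTree ι)

namespace DTree

variable {ι : Type}

/-- The class that a decision tree assigns to an example. -/
noncomputable def classify : DTree ι → (ι → ℝ) → Label
  | .leaf c, _ => c
  | .node f t l r, e => if e f ≤ t then l.classify e else r.classify e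

/-- The routing path of an example (`false` = left child, `true` = right child);
it is the position of the leaf of the example. -/
noncomputable def route : DTree ι → (ι → ℝ) → List Bool
  | .leaf _, _ => []
  | .node f t l r, e => if e f ≤ t then false :: l.route e else true :: r.route e

/-- The subtree rooted at a position (`none` if the position is not a node). -/
def subtreeAt : DTree ι → List Bool → Option (DTree ι)
  | T, [] => some T
  | .leaf _, _ :: _ => none
  | .node _ _ l r, b :: p => (if b then r else l).subtreeAt p

/-- Replace the subtree at a given position by another tree. -/
def replaceAt : DTree ι → List Bool → DTree ι → DTree ι
  | _, [], T' => T'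
  | .leaf c, _ :: _, _ => .leaf c
  | .node f t l r, b :: p, T' =>
      if b then .node f t l (r.replaceAt p T') else .node f t (l.replaceAt p T') r

/-- The number of inner nodes of a decision tree. -/
def innerCount : DTree ι → ℕ
  | .leaf _ => 0
  | .node _ _ l r => 1 + l.innerCount + r.innerCount

/-- The position `p` is an inner node of `T`. -/
def IsInnerPos (T : DTree ι) (p : List Bool) : Prop :=
  ∃ f t l r, T.subtreeAt p = some (.node f t l r)

/-- The position `p` is a node of `T`. -/
def IsNodePos (T : DTree ι) (p : List Bool) : Prop :=
  (T.subtreeAt p).isSome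

/-- The feature and threshold of the inner node at position `p`. -/
def cutAt (T : DTree ι) (p : List Bool) : Option (ι × ℝ) :=
  match T.subtreeAt p with
  | some (.node f t _ _) => some (f, t)
  | _ => none

/-- The subtree raising operation at position `q` keeping the child in direction `b`:
the subtree rooted at `q` is replaced by the subtree rooted at its `b`-child; it prunes
the node at `q` together with all inner nodes of the subtree rooted at the other child. -/
def raiseAt (T : DTree ι) (q : List Bool) (b : Bool) : DTree ι :=
  match T.subtreeAt q with
  | some (.node _ _ l r) => T.replaceAt q (if b then r else l)
  | _ => T

end DTree

/-- `E[T,p]`: the examples of `E` whose routing through `T` passes the position `p`. -/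
noncomputable def reach {ι : Type} (E : Finset (ι → ℝ)) (T : DTree ι) (p : List Bool) :
    Finset (ι → ℝ) :=
  E.filter fun e => p <+: T.route e

/-- The number of errors of `T` on the training set `(E, lab)`. -/
noncomputable def errCount {ι : Type} (T : DTree ι) (E : Finset (ι → ℝ))
    (lab : (ι → ℝ) → Label) : ℕ :=
  (E.filter fun e => T.classify e ≠ lab e).card

/-- A most frequent label of the labeled set `(E, lab)` (blue in case of a tie). -/
def majorityLabel {ι : Type} (E : Finset (ι → ℝ)) (lab : (ι → ℝ) → Label) : Label :=
  if (E.filter fun e => lab e = Label.red).card ≤ (E.filter fun e => lab e = Label.blue).card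
  then Label.blue else Label.red

/-- One subtree replacement operation: some inner node of `T` is replaced by a leaf
labeled with a most frequent label of the examples reaching it. -/
def ReplStep {ι : Type} (E : Finset (ι → ℝ)) (lab : (ι → ℝ) → Label)
    (T T' : DTree ι) : Prop :=
  ∃ p, T.IsInnerPos p ∧
    T' = T.replaceAt p (.leaf (majorityLabel (reach E T p) lab))

/-- `T` is a reasonable decision tree for `(E, lab)`: every node is reached by some
example and every leaf carries a most frequent label of the examples reaching it. -/
def Reasonable {ι : Type} (E : Finset (ι → ℝ)) (lab : (ι → ℝ) → Label)
    (T : DTree ι) : Prop :=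
  (∀ p, T.IsNodePos p → (reach E T p).Nonempty) ∧
  (∀ p c, T.subtreeAt p = some (.leaf c) → ∀ c' : Label,
    ((reach E T p).filter fun e => lab e = c').card ≤
      ((reach E T p).filter fun e => lab e = c).card)

/-- Apply a sequence of raising operations (given by positions and kept directions). -/
def applySeq {ι : Type} : DTree ι → List (List Bool × Bool) → DTree ι
  | T, [] => T
  | T, (q, b) :: rest => applySeq (T.raiseAt q b) rest

/-- Each raising operation of the sequence is applied at an inner node. -/
def ValidSeq {ι : Type} : DTree ι → List (List Bool × Bool) → Prop
  | _, [] => True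
  | T, (q, b) :: rest => T.IsInnerPos q ∧ ValidSeq (T.raiseAt q b) rest

/-- The total number of inner nodes pruned by a sequence of raising operations. -/
def seqPruned {ι : Type} : DTree ι → List (List Bool × Bool) → ℕ
  | _, [] => 0
  | T, (q, b) :: rest =>
      (match T.subtreeAt q with
        | some (.node _ _ l r) => 1 + DTree.innerCount (if b then l else r)
        | _ => 0) + seqPruned (T.raiseAt q b) rest

/-- `T'` is obtained from `T` by a (possibly empty) sequence of subtree raising
operations. -/
def RaisedFrom {ι : Type} (T T' : DTree ι) : Prop :=
  ∃ steps, ValidSeq T steps ∧ applySeq T steps = T'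

/-- `T'` is obtained from `T` by a sequence of subtree raising operations pruning
exactly `m` inner nodes in total. -/
def RaisedFromPruning {ι : Type} (T : DTree ι) (m : ℕ) (T' : DTree ι) : Prop :=
  ∃ steps, ValidSeq T steps ∧ seqPruned T steps = m ∧ applySeq T steps = T'

/-- Tracking the position of a node through one raising operation: nodes strictly
below the raised node on the discarded side, and the raised node itself, are pruned
(`none`); all other nodes survive at a possibly shifted position. -/
def stepMap (q : List Bool) (b : Bool) (p : List Bool) : Option (List Bool) :=
  if q <+: p then
    if q ++ [b] <+: p then some (q ++ p.drop (q.length + 1)) else none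
  else some p

/-- Tracking the position of a node through a sequence of raising operations. -/
def seqMap : List (List Bool × Bool) → List Bool → Option (List Bool)
  | [], p => some p
  | (q, b) :: rest, p => (stepMap q b p).bind (seqMap rest)

/-- The number of errors of `T` on a multiset of labeled examples. -/
noncomputable def errCountM {ι : Type} (T : DTree ι) (E : Multiset ((ι → ℝ) × Label)) : ℕ :=
  (E.filter fun q => T.classify q.1 ≠ q.2).card

/-- A sequence of subtree replacement operations pruning a given total number of
inner nodes (each operation prunes all inner nodes of the replaced subtree; the
label of each new leaf is a most frequent label of the examples reaching the
replaced node). -/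
inductive ReplSeqN {d : ℕ} (E : Finset (Fin d → ℝ)) (lab : (Fin d → ℝ) → Label) :
    DTree (Fin d) → ℕ → DTree (Fin d) → Prop
  | refl (T : DTree (Fin d)) : ReplSeqN E lab T 0 T
  | step {T T'' : DTree (Fin d)} {k : ℕ} (p : List Bool) (f : Fin d) (t : ℝ)
      (l r : DTree (Fin d)) :
      T.subtreeAt p = some (.node f t l r) →
      ReplSeqN E lab (T.replaceAt p (.leaf (majorityLabel (reach E T p) lab))) k T'' →
      ReplSeqN E lab T ((DTree.node f t l r).innerCount + k) T''

/-- `optRepl E lab T k`: the minimum number of errors on `(E, lab)` of a tree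
obtained from `T` by subtree replacement operations pruning exactly `k` inner
nodes in total. -/
noncomputable def optRepl {d : ℕ} (E : Finset (Fin d → ℝ)) (lab : (Fin d → ℝ) → Label)
    (T : DTree (Fin d)) (k : ℕ) : ℕ :=
  sInf {x | ∃ T', ReplSeqN E lab T k T' ∧ errCount T' E lab = x}

/-!
Once the root is replaced, only a majority leaf remains and no further operation applies. A
replacement sequence that prunes fewer than all inner nodes therefore never replaces the root, so
it interleaves a sequence in the left subtree with one in the right subtree. These do not
interact: each sees exactly the examples that the root sends to its side, and both the number of
pruned inner nodes and the number of errors add up.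
-/

section Branch

variable {ι : Type}

/-- The part of a training set that an inner node with feature `f` and threshold `t` sends to its
child in direction `b`, with `false` for left and `true` for right as in `DTree.route`. -/
noncomputable def branch (E : Finset (ι → ℝ)) (f : ι) (t : ℝ) (b : Bool) : Finset (ι → ℝ) :=
  E.filter fun e => decide (t < e f) = b

namespace DTree

theorem route_node (f : ι) (t : ℝ) (u w : DTree ι) (e : ι → ℝ) :
    (node f t u w).route e = decide (t < e f) :: (if t < e f then w else u).route e := by
  by_cases h : e f ≤ t
  · simp [route, h, not_lt.mpr h]
  · simp [route, h, not_le.mp h]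

theorem concat_isPrefix_route_iff {T : DTree ι} {v : List Bool} {f : ι} {t : ℝ} {u w : DTree ι}
    (hv : T.subtreeAt v = some (node f t u w)) (b : Bool) (e : ι → ℝ) :
    v ++ [b] <+: T.route e ↔ v <+: T.route e ∧ decide (t < e f) = b := by
  induction v generalizing T with
  | nil =>
    obtain rfl : T = node f t u w := Option.some.inj hv
    simp [route_node, eq_comm]
  | cons b' p ih =>
    cases T with
    | leaf c => simp [subtreeAt] at hv
    | node f' t' l r =>
      simp only [route_node, List.cons_append, List.cons_prefix_cons, and_assoc]
      refine and_congr_right fun hb' => ih ?_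
      simpa [subtreeAt, hb'] using hv

theorem innerCount_add_innerCount_replaceAt_leaf {T S : DTree ι} {p : List Bool}
    (hp : T.subtreeAt p = some S) (c : Label) :
    S.innerCount + (T.replaceAt p (.leaf c)).innerCount = T.innerCount := by
  induction p generalizing T with
  | nil =>
    obtain rfl : T = S := Option.some.inj hp
    simp [replaceAt, innerCount]
  | cons b p ih =>
    cases T with
    | leaf c => simp [subtreeAt] at hp
    | node f t l r =>
      have ih := ih hp
      cases b <;>
        simp only [replaceAt, innerCount, Bool.false_eq_true, if_true, if_false] at ih ⊢ <;>
        omega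

end DTree

theorem reach_nil (E : Finset (ι → ℝ)) (T : DTree ι) : reach E T [] = E := by
  simp [reach]

theorem reach_concat (E : Finset (ι → ℝ)) {T : DTree ι} {v : List Bool} {f : ι} {t : ℝ}
    {u w : DTree ι} (hv : T.subtreeAt v = some (.node f t u w)) (b : Bool) :
    reach E T (v ++ [b]) = branch (reach E T v) f t b := by
  simp only [reach, branch, DTree.concat_isPrefix_route_iff hv, Finset.filter_filter]

theorem reach_node_cons (E : Finset (ι → ℝ)) (f : ι) (t : ℝ) (u w : DTree ι) (b : Bool)
    (p : List Bool) :
    reach E (.node f t u w) (b :: p) = reach (branch E f t b) (if b then w else u) p := by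
  simp only [reach, branch, Finset.filter_filter, DTree.route_node, List.cons_prefix_cons]
  refine Finset.filter_congr fun e _ => ?_
  rw [eq_comm (a := b)]
  refine and_congr_right fun hb => ?_
  simp only [← hb, decide_eq_true_eq]

end Branch

section Errors

variable {ι : Type} (E : Finset (ι → ℝ)) (lab : (ι → ℝ) → Label)

theorem errCount_leaf (c : Label) :
    errCount (.leaf c) E lab = (E.filter fun e => lab e ≠ c).card :=
  congrArg Finset.card (Finset.filter_congr fun _ _ => ne_comm)

theorem errCount_leaf_majorityLabel :
    errCount (.leaf (majorityLabel E lab)) E lab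
      = min (E.filter fun e => lab e = Label.blue).card
          (E.filter fun e => lab e = Label.red).card := by
  have ne_blue_iff (c : Label) : c ≠ .blue ↔ c = .red := by cases c <;> simp
  have ne_red_iff (c : Label) : c ≠ .red ↔ c = .blue := by cases c <;> simp
  rw [errCount_leaf, majorityLabel]
  split_ifs with h
  · simp only [ne_blue_iff, min_eq_right h]
  · simp only [ne_red_iff, min_eq_left (not_le.mp h).le]

theorem errCount_node (f : ι) (t : ℝ) (u w : DTree ι) :
    errCount (.node f t u w) E lab
      = errCount u (branch E f t false) lab + errCount w (branch E f t true) lab := by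
  simp only [errCount, branch, decide_eq_false_iff_not, decide_eq_true_eq, not_lt]
  rw [← Finset.card_filter_add_card_filter_not (fun e => e f ≤ t)]
  simp only [Finset.filter_filter, not_le]
  congr 2 <;> refine Finset.filter_congr fun e _ => and_comm.trans (and_congr_right fun h => ?_)
  · rw [DTree.classify, if_pos h]
  · rw [DTree.classify, if_neg h.not_ge]

end Errors

section Replacement

variable {d : ℕ} {E : Finset (Fin d → ℝ)} {lab : (Fin d → ℝ) → Label} {f : Fin d} {t : ℝ}
  {T T' u u' w w' : DTree (Fin d)} {i j k : ℕ}

namespace ReplSeqN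

theorem add_innerCount (h : ReplSeqN E lab T k T') : k + T'.innerCount = T.innerCount := by
  induction h with
  | refl T => exact zero_add _
  | step p f t l r hp _ ih =>
    rw [add_assoc, ih, DTree.innerCount_add_innerCount_replaceAt_leaf hp]

theorem eq_leaf {c : Label} (h : ReplSeqN E lab (.leaf c) k T') : T' = .leaf c := by
  cases h with
  | refl => rfl
  | step p f t l r hp _ => cases p <;> simp [DTree.subtreeAt] at hp

theorem leaf_majorityLabel (E : Finset (Fin d → ℝ)) (lab : (Fin d → ℝ) → Label) (f : Fin d)
    (t : ℝ) (u w : DTree (Fin d)) :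
    ReplSeqN E lab (.node f t u w) (DTree.node f t u w).innerCount
      (.leaf (majorityLabel E lab)) := by
  have h := step (E := E) (lab := lab) [] f t u w rfl (refl _)
  rwa [reach_nil, DTree.replaceAt, add_zero] at h

theorem node (hu : ReplSeqN (branch E f t false) lab u i u')
    (hw : ReplSeqN (branch E f t true) lab w j w') :
    ReplSeqN E lab (.node f t u w) (i + j) (.node f t u' w') := by
  induction hu with
  | refl u =>
    rw [zero_add]
    induction hw with
    | refl w => exact refl _
    | step p f₀ t₀ l r hp _ ih =>
      refine step (true :: p) f₀ t₀ l r hp ?_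
      rwa [reach_node_cons]
  | step p f₀ t₀ l r hp _ ih =>
    rw [add_assoc]
    refine step (false :: p) f₀ t₀ l r hp ?_
    rwa [reach_node_cons]

theorem eq_leaf_or_exists_node (h : ReplSeqN E lab (.node f t u w) k T') :
    T' = .leaf (majorityLabel E lab) ∨
      ∃ i j u' w', i + j = k ∧ ReplSeqN (branch E f t false) lab u i u' ∧
        ReplSeqN (branch E f t true) lab w j w' ∧ T' = .node f t u' w' := by
  generalize hS : DTree.node f t u w = S at h
  induction h generalizing u w with
  | refl =>
    subst hS
    exact .inr ⟨0, 0, u, w, rfl, refl _, refl _, rfl⟩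
  | step p f₀ t₀ l r hp hrest ih =>
    subst hS
    rcases p with _ | ⟨_ | _, p⟩
    · rw [reach_nil] at hrest
      exact .inl hrest.eq_leaf
    · refine (ih rfl).imp_right ?_
      rintro ⟨i, j, u', w', rfl, hu, hw, rfl⟩
      rw [reach_node_cons] at hu
      exact ⟨_, j, u', w', add_assoc .., step p f₀ t₀ l r hp hu, hw, rfl⟩
    · refine (ih rfl).imp_right ?_
      rintro ⟨i, j, u', w', rfl, hu, hw, rfl⟩
      rw [reach_node_cons] at hw
      exact ⟨i, _, u', w', add_left_comm .., hu, step p f₀ t₀ l r hp hw, rfl⟩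

theorem eq_leaf_majorityLabel
    (h : ReplSeqN E lab (.node f t u w) (DTree.node f t u w).innerCount T') :
    T' = .leaf (majorityLabel E lab) := by
  have hT' : T'.innerCount = 0 := Nat.add_eq_left.mp h.add_innerCount
  rcases h.eq_leaf_or_exists_node with hleaf | ⟨i, j, u', w', -, -, -, rfl⟩
  · exact hleaf
  · simp [DTree.innerCount] at hT'

theorem exists_node_of_lt (h : ReplSeqN E lab (.node f t u w) k T')
    (hk : k < (DTree.node f t u w).innerCount) :
    ∃ i j u' w', i + j = k ∧ ReplSeqN (branch E f t false) lab u i u' ∧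
      ReplSeqN (branch E f t true) lab w j w' ∧ T' = .node f t u' w' := by
  refine h.eq_leaf_or_exists_node.resolve_left ?_
  rintro rfl
  exact hk.ne h.add_innerCount

theorem exists_of_le (E : Finset (Fin d → ℝ)) (lab : (Fin d → ℝ) → Label)
    (hk : k ≤ T.innerCount) : ∃ T', ReplSeqN E lab T k T' := by
  induction T generalizing E k with
  | leaf c =>
    obtain rfl : k = 0 := Nat.le_zero.mp hk
    exact ⟨_, refl _⟩
  | node f t u w ihu ihw =>
    rcases hk.eq_or_lt with rfl | hlt
    · exact ⟨_, leaf_majorityLabel E lab f t u w⟩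
    · obtain ⟨i, j, hi, hj, rfl⟩ : ∃ i j, i ≤ u.innerCount ∧ j ≤ w.innerCount ∧ i + j = k := by
        rw [DTree.innerCount] at hlt
        exact ⟨min k u.innerCount, k - min k u.innerCount, by omega, by omega, by omega⟩
      obtain ⟨u', hu⟩ := ihu (branch E f t false) hi
      obtain ⟨w', hw⟩ := ihw (branch E f t true) hj
      exact ⟨_, hu.node hw⟩

theorem optRepl_le (h : ReplSeqN E lab T k T') : optRepl E lab T k ≤ errCount T' E lab :=
  Nat.sInf_le ⟨T', h, rfl⟩

end ReplSeqN

theorem exists_errCount_eq_optRepl (E : Finset (Fin d → ℝ)) (lab : (Fin d → ℝ) → Label)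
    (hk : k ≤ T.innerCount) :
    ∃ T', ReplSeqN E lab T k T' ∧ errCount T' E lab = optRepl E lab T k := by
  obtain ⟨T', h⟩ := ReplSeqN.exists_of_le E lab hk
  have hne : {x | ∃ T', ReplSeqN E lab T k T' ∧ errCount T' E lab = x}.Nonempty := ⟨_, T', h, rfl⟩
  exact Nat.sInf_mem hne

theorem optRepl_leaf (E : Finset (Fin d → ℝ)) (lab : (Fin d → ℝ) → Label) (c : Label) :
    optRepl E lab (.leaf c) 0 = (E.filter fun e => lab e ≠ c).card := by
  obtain ⟨T', h, hopt⟩ := exists_errCount_eq_optRepl E lab (T := .leaf c) (Nat.zero_le _)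
  rw [← hopt, h.eq_leaf, errCount_leaf]

theorem optRepl_node_innerCount (E : Finset (Fin d → ℝ)) (lab : (Fin d → ℝ) → Label)
    (f : Fin d) (t : ℝ) (u w : DTree (Fin d)) :
    optRepl E lab (.node f t u w) (DTree.node f t u w).innerCount
      = min (E.filter fun e => lab e = Label.blue).card
          (E.filter fun e => lab e = Label.red).card := by
  obtain ⟨T', h, hopt⟩ := exists_errCount_eq_optRepl E lab (T := .node f t u w) le_rfl
  rw [← hopt, h.eq_leaf_majorityLabel, errCount_leaf_majorityLabel]

theorem optRepl_node_add_le (E : Finset (Fin d → ℝ)) (lab : (Fin d → ℝ) → Label)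
    (f : Fin d) (t : ℝ) (hi : i ≤ u.innerCount) (hj : j ≤ w.innerCount) :
    optRepl E lab (.node f t u w) (i + j)
      ≤ optRepl (branch E f t false) lab u i + optRepl (branch E f t true) lab w j := by
  obtain ⟨u', hu, hu_opt⟩ := exists_errCount_eq_optRepl (branch E f t false) lab hi
  obtain ⟨w', hw, hw_opt⟩ := exists_errCount_eq_optRepl (branch E f t true) lab hj
  rw [← hu_opt, ← hw_opt, ← errCount_node]
  exact (hu.node hw).optRepl_le

theorem exists_optRepl_add_le_optRepl_node (E : Finset (Fin d → ℝ))
    (lab : (Fin d → ℝ) → Label) (hk : k < (DTree.node f t u w).innerCount) :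
    ∃ i j, i + j = k ∧ i ≤ u.innerCount ∧ j ≤ w.innerCount ∧
      optRepl (branch E f t false) lab u i + optRepl (branch E f t true) lab w j
        ≤ optRepl E lab (.node f t u w) k := by
  obtain ⟨T', h, hopt⟩ := exists_errCount_eq_optRepl E lab hk.le
  obtain ⟨i, j, u', w', hij, hu, hw, rfl⟩ := h.exists_node_of_lt hk
  have hi : i ≤ u.innerCount := le_of_add_le_left hu.add_innerCount.le
  have hj : j ≤ w.innerCount := le_of_add_le_left hw.add_innerCount.le
  rw [errCount_node] at hopt
  exact ⟨i, j, hij, hi, hj, hopt ▸ add_le_add hu.optRepl_le hw.optRepl_le⟩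

theorem isLeast_optRepl_node (E : Finset (Fin d → ℝ)) (lab : (Fin d → ℝ) → Label)
    (hk : k < (DTree.node f t u w).innerCount) :
    IsLeast {x | ∃ i, i ≤ k ∧ i ≤ u.innerCount ∧ k - i ≤ w.innerCount ∧
        x = optRepl (branch E f t false) lab u i + optRepl (branch E f t true) lab w (k - i)}
      (optRepl E lab (.node f t u w) k) := by
  constructor
  · obtain ⟨i, j, rfl, hi, hj, hle⟩ := exists_optRepl_add_le_optRepl_node E lab hk
    refine ⟨i, Nat.le_add_right i j, hi, ?_, ?_⟩ <;> rw [Nat.add_sub_cancel_left]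
    · exact hj
    · exact (optRepl_node_add_le E lab f t hi hj).antisymm hle
  · rintro _ ⟨i, hik, hi, hj, rfl⟩
    simpa only [Nat.add_sub_cancel' hik] using optRepl_node_add_le E lab f t hi hj

end Replacement

/-- The dynamic programming recurrence for optimal subtree
replacement: (i) at a leaf `v` of `T`, `opt(v,0)` is the number of examples
of `E[T,v]` whose label differs from the label of `v`; (ii) at an inner node `v`
with children `u` (left) and `w` (right), `opt(v, s_v) = t_v`, and for `k' < s_v`,
`opt(v,k')` is the minimum of `opt(u,k*) + opt(w,k'-k*)` over all `k*` with
`0 ≤ k* ≤ k'`, `k* ≤ s_u` and `k' - k* ≤ s_w`. -/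
theorem stmt2 {d : ℕ} (E : Finset (Fin d → ℝ)) (lab : (Fin d → ℝ) → Label)
    (T : DTree (Fin d)) :
    (∀ (v : List Bool) (c : Label), T.subtreeAt v = some (.leaf c) →
      optRepl (reach E T v) lab (.leaf c) 0
        = ((reach E T v).filter fun e => lab e ≠ c).card)
    ∧ (∀ (v : List Bool) (f : Fin d) (t : ℝ) (u w : DTree (Fin d)),
        T.subtreeAt v = some (.node f t u w) →
        (optRepl (reach E T v) lab (.node f t u w) ((DTree.node f t u w).innerCount)
            = min (((reach E T v).filter fun e => lab e = Label.blue).card)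
                  (((reach E T v).filter fun e => lab e = Label.red).card))
        ∧ ∀ k' < (DTree.node f t u w).innerCount,
            optRepl (reach E T v) lab (.node f t u w) k'
              = sInf {x | ∃ ks, ks ≤ k' ∧ ks ≤ u.innerCount ∧ k' - ks ≤ w.innerCount ∧
                  x = optRepl (reach E T (v ++ [false])) lab u ks
                    + optRepl (reach E T (v ++ [true])) lab w (k' - ks)}) := by
  refine ⟨fun v c _ => optRepl_leaf _ lab c, fun v f t u w hv =>
    ⟨optRepl_node_innerCount _ lab f t u w, fun k' hk' => ?_⟩⟩
  rw [reach_concat E hv, reach_concat E hv]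
  exact (isLeast_optRepl_node _ lab hk').csInf_eq.symm
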